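/- (Surrogate tracking error lemma.) Suppose Assumptions 1–3 hold with δ ∈ (0,1), λ̃ᵗ = Ãᵀμ for some μ, X^{t+1} = βXᵗ + (1−β)X̂ᵗ − α(∇𝐟(Xᵗ) + λ̃ᵗ + θÃᵀÃX̂ᵗ) with β = 1 − αθM, and X̂^{t+1} = X̂ᵗ + Q(X^{t+1} − X̂ᵗ; ξ) where Xᵗ, X̂ᵗ, λ̃ᵗ are deterministic and the expectation is over ξ. Then, with vᵗ = α(λ̃ᵗ + ∇𝐟((𝟙 ⊗ I_d)X̄ᵗ)) and δ̃₀ = (1−δ)²(1−δ/2)²/((1−δ/2)² − (1−δ)²): E‖X̂^{t+1} − X^{t+1}‖² ≤ ((1−δ/2)² + 4δ̃₀α²θ²(ρ̃₁ + M)²)‖X̂ᵗ − Xᵗ‖² + 4δ̃₀α²(θ²ρ̃₁² + L²)‖Xᵗ‖²_{K̃} + 4δ̃₀‖vᵗ‖². -/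

import Mathlib

/-!
The proof rests on the decomposition, with `D = X̂ᵗ − Xᵗ` and `S = ÃᵀÃ`,
`X^{t+1} − X̂ᵗ = −D + (αθ(M·D − S D) − αθ S Xᵗ − α(∇𝐟(Xᵗ) − ∇𝐟((𝟙 ⊗ I)X̄ᵗ)) − vᵗ)`.
The compression assumption bounds the expected error by `(1−δ)²` times the squared norm of the left
side. Young's inequality separates `D` from the remainder, with the parameter chosen so that `‖D‖²`
gets the coefficient `(1−δ/2)²`; the remainder then gets exactly `δ̃₀`, and the squared norm of
its four terms is at most four times the sum of their squared norms.

The terms involving `S` are controlled by `‖S x‖² ≤ ρ₁²‖x‖²_K̃` (`sqnorm_lapl_le`), a consequence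
of `0 ⪯ S ⪯ ρ₁K̃` and `K̃ ⪯ I`; the gradient difference is controlled by smoothness, since
`‖x − (𝟙 ⊗ I)x̄‖² = ‖x‖²_K̃`.
-/

open Matrix MeasureTheory ProbabilityTheory
open scoped Kronecker

noncomputable section

/-- squared Euclidean norm ‖v‖² of a finitely indexed real vector. -/
def sqnorm {ι : Type*} [Fintype ι] (v : ι → ℝ) : ℝ := ∑ i, (v i) ^ 2

/-- Euclidean norm ‖v‖. -/
def enorm' {ι : Type*} [Fintype ι] (v : ι → ℝ) : ℝ := Real.sqrt (sqnorm v)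

/-- matrix-weighted squared (semi)norm ‖v‖²_P = vᵀ P v. -/
def wnorm2 {ι : Type*} [Fintype ι] (P : Matrix ι ι ℝ) (v : ι → ℝ) : ℝ := v ⬝ᵥ P.mulVec v

/-- matrix-weighted inner product ⟨x, y⟩_P = xᵀ P y. -/
def winner {ι : Type*} [Fintype ι] (P : Matrix ι ι ℝ) (x y : ι → ℝ) : ℝ := x ⬝ᵥ P.mulVec y

/-- the consensus projector K̃ = (Iₙ − (1/n)𝟙𝟙ᵀ) ⊗ I_d. -/
def Ktil (n d : ℕ) : Matrix (Fin n × Fin d) (Fin n × Fin d) ℝ :=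
  ((1 : Matrix (Fin n) (Fin n) ℝ) - (n : ℝ)⁻¹ • Matrix.of (fun _ _ => (1 : ℝ))) ⊗ₖ
    (1 : Matrix (Fin d) (Fin d) ℝ)

/-- `A` is a (signed) incidence matrix of an undirected graph: each row has exactly one `+1`
entry and one `-1` entry, all other entries being `0`. -/
def IsIncidence {e n : ℕ} (A : Matrix (Fin e) (Fin n) ℝ) : Prop :=
  ∀ r : Fin e, ∃ i j : Fin n, i ≠ j ∧ A r i = 1 ∧ A r j = -1 ∧
    ∀ k : Fin n, k ≠ i → k ≠ j → A r k = 0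

/-- `Q` is the Moore–Penrose pseudoinverse of `S` (the four Penrose conditions). -/
def IsMoorePenrose {ι : Type*} [Fintype ι] [DecidableEq ι] (S Q : Matrix ι ι ℝ) : Prop :=
  S * Q * S = S ∧ Q * S * Q = Q ∧ (S * Q)ᵀ = S * Q ∧ (Q * S)ᵀ = Q * S

/-- the ℓ₂ operator (spectral) norm of a square matrix. -/
def specNorm {ι : Type*} [Fintype ι] [DecidableEq ι] (S : Matrix ι ι ℝ) : ℝ :=
  ‖Matrix.toEuclideanCLM (𝕜 := ℝ) S‖

/-- Ã = A ⊗ I_d. -/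
def Atil {e n : ℕ} (d : ℕ) (A : Matrix (Fin e) (Fin n) ℝ) :
    Matrix (Fin e × Fin d) (Fin n × Fin d) ℝ :=
  A ⊗ₖ (1 : Matrix (Fin d) (Fin d) ℝ)

/-- the (tensored) graph Laplacian ÃᵀÃ. -/
def lapl {e n : ℕ} (d : ℕ) (A : Matrix (Fin e) (Fin n) ℝ) :
    Matrix (Fin n × Fin d) (Fin n × Fin d) ℝ :=
  (Atil d A)ᵀ * Atil d A

/-- the network average X̄ = (1/n)(𝟙ᵀ ⊗ I_d)X. -/
def xbar {n d : ℕ} (X : Fin n × Fin d → ℝ) : Fin d → ℝ := fun j => (n : ℝ)⁻¹ * ∑ i, X (i, j)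

/-- the consensus embedding (𝟙 ⊗ I_d)x̄ of a vector x̄ ∈ ℝ^d into ℝ^{nd}. -/
def consVec {d : ℕ} (n : ℕ) (x : Fin d → ℝ) : Fin n × Fin d → ℝ := fun p => x p.2

/-- the stacked gradient ∇𝐟(X) = (∇f₁(X₁), …, ∇f_n(X_n)). -/
def gradF {n d : ℕ} (gradf : Fin n → (Fin d → ℝ) → (Fin d → ℝ)) (X : Fin n × Fin d → ℝ) :
    Fin n × Fin d → ℝ := fun p => gradf p.1 (fun j => X (p.1, j)) p.2

/-- the averaged objective f(x̄) = (1/n)∑ᵢ fᵢ(x̄). -/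
def fbar {n d : ℕ} (f : Fin n → (Fin d → ℝ) → ℝ) (x : Fin d → ℝ) : ℝ :=
  (n : ℝ)⁻¹ * ∑ i, f i x

/-- the averaged gradient ∇f(x̄) = (1/n)∑ᵢ ∇fᵢ(x̄). -/
def gradfbar {n d : ℕ} (gradf : Fin n → (Fin d → ℝ) → (Fin d → ℝ)) (x : Fin d → ℝ) :
    Fin d → ℝ := fun j => (n : ℝ)⁻¹ * ∑ i, gradf i x j

/-- a gradient vector, seen as a continuous linear functional on ℝ^d. -/
def dotCLM {d : ℕ} (g : Fin d → ℝ) : (Fin d → ℝ) →L[ℝ] ℝ :=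
  ∑ j, g j • ContinuousLinearMap.proj j

/-- the auxiliary dual-tracking variable vᵗ = α(λ̃ᵗ + ∇𝐟((𝟙 ⊗ I_d)X̄ᵗ)). -/
def vTi {n d : ℕ} (gradf : Fin n → (Fin d → ℝ) → (Fin d → ℝ)) (α : ℝ)
    (lam X : Fin n × Fin d → ℝ) : Fin n × Fin d → ℝ :=
  α • (lam + gradF gradf (consVec n (xbar X)))

/-- δ̃ = max{(1−δ)²(1−δ/2)²/((1−δ/2)²−(1−δ)²), 1}. -/
def deltaTil (δ : ℝ) : ℝ := max ((1 - δ) ^ 2 * (1 - δ / 2) ^ 2 / ((1 - δ / 2) ^ 2 - (1 - δ) ^ 2)) 1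

/-- δ₂ = max{16η/δ, 1}. -/
def delta2 (δ η : ℝ) : ℝ := max (16 * η / δ) 1

/-- δ₁ = 12·max{2, 2/(ρ̃₂η), δ₂δ̃}. -/
def delta1 (δ η ρ₂ : ℝ) : ℝ := 12 * max (max 2 (2 / (ρ₂ * η))) (delta2 δ η * deltaTil δ)

/-- θ_lb. -/
def thetaLb (n : ℕ) (L a η ρ₁ ρ₂ δ : ℝ) : ℝ :=
  max (4 * L ^ 2 / (n * ρ₂ * a))
    ((2 / ρ₂) * (1 + 2 * L + 8 * η * ρ₁ ^ 2 / ρ₂ +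
      delta1 δ η ρ₂ * (3 / 2 + 3 * L ^ 2 + η * ρ₁ + ρ₁ ^ 2 / 2)))

/-- α_ub = (max{16η, δ}/(320θ²))·min{1/M², na/M², 1/ρ̃₁²}. -/
def alphaUb (n : ℕ) (a η δ θ M ρ₁ : ℝ) : ℝ :=
  (max (16 * η) δ / (320 * θ ^ 2)) * min (min (1 / M ^ 2) (n * a / M ^ 2)) (1 / ρ₁ ^ 2)

/-- one step of the TiCoPD recursion, driven by compression randomness ξ. -/
def TiCoPD {e n d : ℕ} {Ω S : Type*} (A : Matrix (Fin e) (Fin n) ℝ)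
    (gradf : Fin n → (Fin d → ℝ) → (Fin d → ℝ)) (α β θ η : ℝ)
    (ξ : ℕ → Ω → S) (Q : (Fin n × Fin d → ℝ) → S → (Fin n × Fin d → ℝ))
    (X Xhat lam : ℕ → Ω → (Fin n × Fin d → ℝ)) : Prop :=
  ∀ t ω,
    X (t + 1) ω = β • X t ω + (1 - β) • Xhat t ω -
        α • (gradF gradf (X t ω) + lam t ω + θ • (lapl d A).mulVec (Xhat t ω)) ∧
    lam (t + 1) ω = lam t ω + η • (lapl d A).mulVec (Xhat t ω) ∧
    Xhat (t + 1) ω = Xhat t ω + Q (X (t + 1) ω - Xhat t ω) (ξ (t + 1) ω)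

/-- the Lyapunov function F_t of Theorem 1. -/
def FLyap {n d : ℕ} (f : Fin n → (Fin d → ℝ) → ℝ)
    (gradf : Fin n → (Fin d → ℝ) → (Fin d → ℝ))
    (Qtil : Matrix (Fin n × Fin d) (Fin n × Fin d) ℝ)
    (fstar a α η θ δ₁ δ₂ : ℝ) (X Xhat lam : Fin n × Fin d → ℝ) : ℝ :=
  fbar f (xbar X) - fstar +
    (a / (η * α)) *
      wnorm2 (Qtil + (α * ((δ₁ / 2) * (θ + η) - θ - δ₂ * θ)) • Ktil n d) (vTi gradf α lam X) +
    a * wnorm2 (Ktil n d) X +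
    δ₁ * a * winner (Ktil n d) X (vTi gradf α lam X) +
    δ₂ * a * sqnorm (Xhat - X)


lemma sqnorm_eq_dot {ι : Type*} [Fintype ι] (v : ι → ℝ) : sqnorm v = v ⬝ᵥ v := by
  simp [sqnorm, dotProduct, sq]

lemma sqnorm_nonneg {ι : Type*} [Fintype ι] (v : ι → ℝ) : 0 ≤ sqnorm v :=
  Finset.sum_nonneg fun _ _ => sq_nonneg _

lemma sqnorm_smul {ι : Type*} [Fintype ι] (c : ℝ) (v : ι → ℝ) :
    sqnorm (c • v) = c ^ 2 * sqnorm v := by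
  simp [sqnorm, mul_pow, Finset.mul_sum]

lemma enorm'_sq {ι : Type*} [Fintype ι] (v : ι → ℝ) : enorm' v ^ 2 = sqnorm v :=
  Real.sq_sqrt (sqnorm_nonneg v)

/-- `K̃` subtracts the network average from every node. -/
lemma Ktil_mulVec {n d : ℕ} (x : Fin n × Fin d → ℝ) :
    (Ktil n d).mulVec x = x - consVec n (xbar x) := by
  have h : ∀ p : Fin n × Fin d, (Ktil n d).mulVec x p = x p - (n : ℝ)⁻¹ * ∑ i, x (i, p.2) := by
    rintro ⟨i, j⟩
    simp [Ktil, Matrix.mulVec, dotProduct, Fintype.sum_prod_type, Matrix.one_apply, sub_mul,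
      Finset.sum_sub_distrib, Finset.mul_sum, mul_ite, ite_mul]
  funext p
  simp [h, consVec, xbar]

/-- The average is orthogonal to the deviation from it. -/
lemma cons_dot_dev {n d : ℕ} (hn : n ≠ 0) (x : Fin n × Fin d → ℝ) :
    consVec n (xbar x) ⬝ᵥ (x - consVec n (xbar x)) = 0 := by
  have hn' : (n : ℝ) ≠ 0 := Nat.cast_ne_zero.mpr hn
  simp only [dotProduct, consVec, Pi.sub_apply, Fintype.sum_prod_type_right]
  refine Finset.sum_eq_zero fun j _ => ?_
  rw [← Finset.mul_sum, Finset.sum_sub_distrib]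
  simp [xbar, hn']

lemma wnorm2_Ktil_eq {n d : ℕ} (hn : n ≠ 0) (x : Fin n × Fin d → ℝ) :
    wnorm2 (Ktil n d) x = sqnorm (x - consVec n (xbar x)) := by
  rw [wnorm2, Ktil_mulVec, sqnorm_eq_dot, sub_dotProduct, cons_dot_dev hn, sub_zero]

lemma wnorm2_Ktil_le {n d : ℕ} (hn : n ≠ 0) (x : Fin n × Fin d → ℝ) :
    wnorm2 (Ktil n d) x ≤ sqnorm x := by
  have h1 := cons_dot_dev hn x
  have h2 := sqnorm_nonneg (consVec n (xbar x))
  rw [wnorm2, Ktil_mulVec, dotProduct_sub, sqnorm_eq_dot]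
  rw [dotProduct_sub] at h1
  rw [sqnorm_eq_dot] at h2
  rw [dotProduct_comm x (consVec n (xbar x))]
  linarith

lemma dot_lapl {e n d : ℕ} (A : Matrix (Fin e) (Fin n) ℝ) (x y : Fin n × Fin d → ℝ) :
    x ⬝ᵥ (lapl d A).mulVec y = (Atil d A).mulVec x ⬝ᵥ (Atil d A).mulVec y := by
  rw [lapl, ← Matrix.mulVec_mulVec, Matrix.dotProduct_mulVec, Matrix.vecMul_transpose]

/-- `0 ⪯ S ⪯ ρK̃` and `K̃ ⪯ I` imply `S² ⪯ ρ²K̃`, where `S = ÃᵀÃ`. -/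
lemma sqnorm_lapl_le {e n d : ℕ} (hn : n ≠ 0) (A : Matrix (Fin e) (Fin n) ℝ) (ρ : ℝ) (hρ : 0 < ρ)
    (h : (ρ • Ktil n d - lapl d A).PosSemidef) (x : Fin n × Fin d → ℝ) :
    sqnorm ((lapl d A).mulVec x) ≤ ρ ^ 2 * wnorm2 (Ktil n d) x := by
  have key : ∀ y : Fin n × Fin d → ℝ,
      sqnorm ((Atil d A).mulVec y) ≤ ρ * wnorm2 (Ktil n d) y := by
    intro y
    have h1 := h.dotProduct_mulVec_nonneg y
    simp only [star_trivial, Matrix.sub_mulVec, Matrix.smul_mulVec, dotProduct_sub,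
      dotProduct_smul, smul_eq_mul, dot_lapl] at h1
    rw [sqnorm_eq_dot, wnorm2]
    linarith
  set z := (lapl d A).mulVec x with hz
  have hzx : (Atil d A).mulVec z ⬝ᵥ (Atil d A).mulVec x = sqnorm z := by
    rw [← dot_lapl, sqnorm_eq_dot]
  -- Nonnegativity of `⟨w, S w⟩` at `w = z - ρ x` replaces the Cauchy–Schwarz inequality for `S`.
  have h0 := sqnorm_nonneg ((Atil d A).mulVec (z - ρ • x))
  rw [sqnorm_eq_dot, Matrix.mulVec_sub, Matrix.mulVec_smul] at h0
  simp only [dotProduct_sub, sub_dotProduct, dotProduct_smul, smul_dotProduct, smul_eq_mul,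
    dotProduct_comm ((Atil d A).mulVec x) ((Atil d A).mulVec z), hzx, ← sqnorm_eq_dot] at h0
  have h1 := (key z).trans (mul_le_mul_of_nonneg_left (wnorm2_Ktil_le hn z) hρ.le)
  have h2 := mul_le_mul_of_nonneg_left (key x) (sq_nonneg ρ)
  refine le_of_mul_le_mul_left ?_ hρ
  nlinarith

/-- Expanding the square, the cross term has a favorable sign because `S ⪰ 0`. -/
lemma sqnorm_shift_lapl_le {e n d : ℕ} (hn : n ≠ 0) (A : Matrix (Fin e) (Fin n) ℝ) (ρ M : ℝ)
    (hρ : 0 < ρ) (hM : 0 ≤ M) (h : (ρ • Ktil n d - lapl d A).PosSemidef)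
    (x : Fin n × Fin d → ℝ) :
    sqnorm (M • x - (lapl d A).mulVec x) ≤ (ρ + M) ^ 2 * sqnorm x := by
  have h1 := sqnorm_lapl_le hn A ρ hρ h x
  have h2 := mul_le_mul_of_nonneg_left (wnorm2_Ktil_le hn x) (sq_nonneg ρ)
  have h3 : 0 ≤ x ⬝ᵥ (lapl d A).mulVec x := by
    rw [dot_lapl, ← sqnorm_eq_dot]; exact sqnorm_nonneg _
  have h4 : sqnorm (M • x - (lapl d A).mulVec x) = M ^ 2 * sqnorm x
      - 2 * M * (x ⬝ᵥ (lapl d A).mulVec x) + sqnorm ((lapl d A).mulVec x) := by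
    simp only [sqnorm_eq_dot, dotProduct_sub, sub_dotProduct, dotProduct_smul, smul_dotProduct,
      smul_eq_mul, dotProduct_comm ((lapl d A).mulVec x) x]
    ring
  rw [h4]
  have h5 := mul_nonneg hM h3
  have h6 := mul_nonneg (mul_nonneg hρ.le hM) (sqnorm_nonneg x)
  nlinarith

lemma sqnorm_gradF_sub_le {n d : ℕ} (gradf : Fin n → (Fin d → ℝ) → (Fin d → ℝ)) (L : ℝ)
    (hlip : ∀ i x y, enorm' (gradf i x - gradf i y) ≤ L * enorm' (x - y))
    (X Y : Fin n × Fin d → ℝ) :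
    sqnorm (gradF gradf X - gradF gradf Y) ≤ L ^ 2 * sqnorm (X - Y) := by
  simp only [sqnorm, Fintype.sum_prod_type, Finset.mul_sum (s := (Finset.univ : Finset (Fin n)))]
  refine Finset.sum_le_sum fun i _ => ?_
  have h := pow_le_pow_left₀ (Real.sqrt_nonneg _)
    (hlip i (fun j => X (i, j)) (fun j => Y (i, j))) 2
  rw [mul_pow] at h
  change enorm' _ ^ 2 ≤ _ at h
  rw [enorm'_sq, enorm'_sq] at h
  exact h

lemma sqnorm_four_le {ι : Type*} [Fintype ι] (a b c d : ι → ℝ) :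
    sqnorm (a - b - c - d) ≤ 4 * (sqnorm a + sqnorm b + sqnorm c + sqnorm d) := by
  simp only [sqnorm, ← Finset.sum_add_distrib, Finset.mul_sum, Pi.sub_apply]
  refine Finset.sum_le_sum fun i _ => ?_
  nlinarith [sq_nonneg (a i + b i), sq_nonneg (a i + c i), sq_nonneg (a i + d i),
    sq_nonneg (b i - c i), sq_nonneg (b i - d i), sq_nonneg (c i - d i)]

/-- Young's inequality with the parameter `c = (q² − p²)/p²`, in a form scaled by `p²`, so that
`p²(1 + c) = q²` and `p²(1 + 1/c) = p²q²/(q² − p²)`. -/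
lemma young_sqnorm {ι : Type*} [Fintype ι] (p q : ℝ) (hpq : p ^ 2 < q ^ 2) (a b : ι → ℝ) :
    p ^ 2 * sqnorm (b - a) ≤
      q ^ 2 * sqnorm a + p ^ 2 * q ^ 2 / (q ^ 2 - p ^ 2) * sqnorm b := by
  simp only [sqnorm, ← Finset.sum_add_distrib, Finset.mul_sum, Pi.sub_apply]
  refine Finset.sum_le_sum fun i _ => ?_
  have hr : 0 < q ^ 2 - p ^ 2 := sub_pos.mpr hpq
  have h : q ^ 2 * a i ^ 2 + p ^ 2 * q ^ 2 / (q ^ 2 - p ^ 2) * b i ^ 2 - p ^ 2 * (b i - a i) ^ 2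
      = ((q ^ 2 - p ^ 2) * a i + p ^ 2 * b i) ^ 2 / (q ^ 2 - p ^ 2) := by
    field_simp
    ring
  have := div_nonneg (sq_nonneg ((q ^ 2 - p ^ 2) * a i + p ^ 2 * b i)) hr.le
  linarith

/-- **Surrogate tracking error lemma.**  Under Assumptions 1–3 with δ ∈ (0,1), λ̃ᵗ = Ãᵀμ,
the TiCoPD primal step with β = 1 − αθM, and the surrogate update
X̂^{t+1} = X̂ᵗ + Q(X^{t+1} − X̂ᵗ; ξ), with δ̃₀ = (1−δ)²(1−δ/2)²/((1−δ/2)²−(1−δ)²):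
E‖X̂^{t+1} − X^{t+1}‖² ≤ ((1−δ/2)² + 4δ̃₀α²θ²(ρ̃₁+M)²)‖X̂ᵗ − Xᵗ‖²
  + 4δ̃₀α²(θ²ρ̃₁² + L²)‖Xᵗ‖²_K̃ + 4δ̃₀‖vᵗ‖². -/
theorem ticopd_surrogate_tracking_error
    {n d e : ℕ} (hn : 2 ≤ n) (hd : 1 ≤ d)
    (A : Matrix (Fin e) (Fin n) ℝ) (hA : IsIncidence A)
    -- Assumption 2
    (ρ₁ ρ₂ : ℝ) (hρ : ρ₂ ≤ ρ₁) (hρ₂ : 0 < ρ₂)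
    (h2a : (lapl d A - ρ₂ • Ktil n d).PosSemidef)
    (h2b : (ρ₁ • Ktil n d - lapl d A).PosSemidef)
    -- Assumption 1
    (f : Fin n → (Fin d → ℝ) → ℝ) (gradf : Fin n → (Fin d → ℝ) → (Fin d → ℝ)) (L : ℝ)
    (hdiff : ∀ i x, HasFDerivAt (f i) (dotCLM (gradf i x)) x)
    (hlip : ∀ i x y, enorm' (gradf i x - gradf i y) ≤ L * enorm' (x - y))
    -- Assumption 3, over a probability space carrying ξ
    {Ω : Type*} [MeasurableSpace Ω] (μ : Measure Ω) [IsProbabilityMeasure μ]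
    (Q : (Fin n × Fin d → ℝ) → Ω → (Fin n × Fin d → ℝ))
    (δ : ℝ) (hδ0 : 0 < δ) (hδ1 : δ < 1)
    (hQ : ∀ x : Fin n × Fin d → ℝ, ∫ ω, sqnorm (Q x ω - x) ∂μ ≤ (1 - δ) ^ 2 * sqnorm x)
    -- dual variable in the range of Ãᵀ
    (lam : Fin n × Fin d → ℝ) (μv : Fin e × Fin d → ℝ) (hlam : lam = (Atil d A)ᵀ.mulVec μv)
    -- step sizes
    (α β θ η : ℝ) (hα : 0 < α) (hθ : 0 < θ) (hη : 0 < η)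
    (hβ : β = 1 - α * θ * specNorm (lapl d A))
    -- one primal step followed by the (random) surrogate update
    (X Xhat Xnext : Fin n × Fin d → ℝ) (Xhatnext : Ω → (Fin n × Fin d → ℝ))
    (hXnext : Xnext = β • X + (1 - β) • Xhat -
        α • (gradF gradf X + lam + θ • (lapl d A).mulVec Xhat))
    (hXhatnext : ∀ ω, Xhatnext ω = Xhat + Q (Xnext - Xhat) ω) :
    (∫ ω, sqnorm (Xhatnext ω - Xnext) ∂μ) ≤
      ((1 - δ / 2) ^ 2 +
          4 * ((1 - δ) ^ 2 * (1 - δ / 2) ^ 2 / ((1 - δ / 2) ^ 2 - (1 - δ) ^ 2)) *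
            α ^ 2 * θ ^ 2 * (ρ₁ + specNorm (lapl d A)) ^ 2) * sqnorm (Xhat - X) +
        4 * ((1 - δ) ^ 2 * (1 - δ / 2) ^ 2 / ((1 - δ / 2) ^ 2 - (1 - δ) ^ 2)) *
          α ^ 2 * (θ ^ 2 * ρ₁ ^ 2 + L ^ 2) * wnorm2 (Ktil n d) X +
        4 * ((1 - δ) ^ 2 * (1 - δ / 2) ^ 2 / ((1 - δ / 2) ^ 2 - (1 - δ) ^ 2)) *
          sqnorm (vTi gradf α lam X) := by
  have hn0 : n ≠ 0 := by omega
  have hρ₁ : 0 < ρ₁ := hρ₂.trans_le hρ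
  set M := specNorm (lapl d A) with hM
  have hM0 : 0 ≤ M := norm_nonneg _
  have hpq : (1 - δ) ^ 2 < (1 - δ / 2) ^ 2 := by nlinarith
  set δ₀ := (1 - δ) ^ 2 * (1 - δ / 2) ^ 2 / ((1 - δ / 2) ^ 2 - (1 - δ) ^ 2) with hδ₀
  have hδ₀0 : 0 ≤ δ₀ := div_nonneg (by positivity) (sub_pos.mpr hpq).le
  set C := consVec n (xbar X) with hC
  set R := (α * θ) • (M • (Xhat - X) - (lapl d A).mulVec (Xhat - X))
    - (α * θ) • (lapl d A).mulVec X - α • (gradF gradf X - gradF gradf C)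
    - vTi gradf α lam X with hR
  have hstep : Xnext - Xhat = R - (Xhat - X) := by
    rw [hXnext, hβ, hR, vTi, ← hC, Matrix.mulVec_sub]
    funext p
    simp only [Pi.sub_apply, Pi.add_apply, Pi.smul_apply, smul_eq_mul]
    ring
  have hexp : (∫ ω, sqnorm (Xhatnext ω - Xnext) ∂μ) ≤ (1 - δ) ^ 2 * sqnorm (R - (Xhat - X)) := by
    rw [← hstep]
    refine le_trans (le_of_eq ?_) (hQ (Xnext - Xhat))
    congr 1
    funext ω
    rw [hXhatnext]
    congr 1
    abel
  have hRle : sqnorm R ≤ 4 * ((α * θ) ^ 2 * ((ρ₁ + M) ^ 2 * sqnorm (Xhat - X))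
      + (α * θ) ^ 2 * (ρ₁ ^ 2 * wnorm2 (Ktil n d) X)
      + α ^ 2 * (L ^ 2 * wnorm2 (Ktil n d) X) + sqnorm (vTi gradf α lam X)) := by
    refine (sqnorm_four_le _ _ _ _).trans ?_
    rw [sqnorm_smul, sqnorm_smul, sqnorm_smul]
    gcongr
    · exact sqnorm_shift_lapl_le hn0 A ρ₁ M hρ₁ hM0 h2b _
    · exact sqnorm_lapl_le hn0 A ρ₁ hρ₁ h2b X
    · rw [wnorm2_Ktil_eq hn0]
      exact sqnorm_gradF_sub_le gradf L hlip X C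
  have hY := young_sqnorm (1 - δ) (1 - δ / 2) hpq (Xhat - X) R
  have hfin := mul_le_mul_of_nonneg_left hRle hδ₀0
  calc _ ≤ _ := hexp
    _ ≤ _ := hY
    _ ≤ _ := add_le_add_right hfin _
    _ = _ := by ring

end
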